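/- Let n ≥ 2 and let U = { x ∈ ℝⁿ : |x| < 1 } ∖ { x ∈ ℝⁿ : x_n = 0 and x_{n−1} ≤ 0 } be the open unit ball with the trace of the closed half-hyperplane { x_n = 0, x_{n−1} ≤ 0 } deleted. Then U is an inner uniform domain: there exist c ∈ (0,1) and C ∈ (1,∞) such that U is (c,C)-inner uniform. -/

import Mathlib

open Set Metric MeasureTheory ENNReal

noncomputable section

abbrev En (n : ℕ) := EuclideanSpace ℝ (Fin n)

/-- The length of the curve `γ : [0,1] → X`, defined as the supremum of sums
`∑ d(γ(t_i), γ(t_{i-1}))` over partitions `0 ≤ t₀ < … < t_k ≤ 1`. -/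
def curveLength {X : Type*} [PseudoEMetricSpace X] (γ : ℝ → X) : ℝ≥0∞ :=
  eVariationOn γ (Set.Icc 0 1)

/-- `γ` is a continuous curve in `Ω` from `x` to `y`. -/
def IsCurveIn {X : Type*} [PseudoEMetricSpace X] (Ω : Set X) (x y : X) (γ : ℝ → X) : Prop :=
  ContinuousOn γ (Set.Icc 0 1) ∧ Set.MapsTo γ (Set.Icc 0 1) Ω ∧ γ 0 = x ∧ γ 1 = y

/-- The inner (pseudo)metric of `Ω`: the infimum of lengths of continuous curves
joining `x` to `y` inside `Ω`. -/
def innerDist {X : Type*} [PseudoEMetricSpace X] (Ω : Set X) (x y : X) : ℝ≥0∞ :=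
  ⨅ (γ : ℝ → X) (_ : IsCurveIn Ω x y γ), curveLength γ

/-- `U` is a `(c,C)`-uniform domain in `ℝⁿ`. -/
def IsUniformDomain {n : ℕ} (c C : ℝ) (U : Set (En n)) : Prop :=
  IsOpen U ∧ IsConnected U ∧
    ∀ x ∈ U, ∀ y ∈ U, ∃ γ : ℝ → En n, IsCurveIn U x y γ ∧
      curveLength γ ≤ ENNReal.ofReal (C * dist x y) ∧
      ∀ t ∈ Set.Icc (0:ℝ) 1,
        c * min (dist x (γ t)) (dist (γ t) y) ≤ Metric.infDist (γ t) (frontier U)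

/-- The Laplacian `∑ ∂²f/∂xᵢ²` of `f : ℝⁿ → ℝ`. -/
def lap {n : ℕ} (f : En n → ℝ) (x : En n) : ℝ :=
  ∑ i : Fin n,
    fderiv ℝ (fun y => fderiv ℝ f y (EuclideanSpace.single i 1)) x (EuclideanSpace.single i 1)

/-- `f` is harmonic on the open set `V`: twice continuously differentiable with
vanishing Laplacian. -/
def IsHarmonicOn {n : ℕ} (f : En n → ℝ) (V : Set (En n)) : Prop :=
  ContDiffOn ℝ 2 f V ∧ ∀ x ∈ V, lap f x = 0

/-- `γ : [0,1] → Ω` is a `(c,C)`-inner uniform curve in `Ω`. -/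
def IsInnerUniformCurve {X : Type*} [PseudoEMetricSpace X] (c C : ℝ) (Ω : Set X)
    (γ : ℝ → X) : Prop :=
  ContinuousOn γ (Set.Icc 0 1) ∧ Set.MapsTo γ (Set.Icc 0 1) Ω ∧
    curveLength γ ≤ ENNReal.ofReal C * innerDist Ω (γ 0) (γ 1) ∧
    ∀ t ∈ Set.Icc (0:ℝ) 1,
      ENNReal.ofReal c * min (innerDist Ω (γ 0) (γ t)) (innerDist Ω (γ t) (γ 1)) ≤
        EMetric.infEdist (γ t) Ωᶜ

/-- `Ω` is a `(c,C)`-inner uniform domain. -/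
def IsInnerUniformDomain {X : Type*} [PseudoEMetricSpace X] (c C : ℝ) (Ω : Set X) : Prop :=
  IsOpen Ω ∧ IsConnected Ω ∧
    ∀ x ∈ Ω, ∀ y ∈ Ω, ∃ γ : ℝ → X, IsInnerUniformCurve c C Ω γ ∧ γ 0 = x ∧ γ 1 = y

/-!
Angle doubling `w ↦ w² / |w|` in the plane of the last two coordinates opens the half ball
`{|x| < 1, x_{n-1} > 0}` onto the slit ball. It is 2-Lipschitz, it does not decrease the distance
to the complement of the domain, and it does not decrease the distance of two points whose images
lie on the same side of the hyperplane `x_n = 0`. A curve in the slit ball that joins the two sides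
of this hyperplane meets it inside the slit ball; splitting the curve there shows that the inverse
map is 1-Lipschitz for the inner metric of the slit ball. So the slit ball inherits inner
uniformity from the half ball, where, as in every bounded convex open set, a segment bent towards
an interior point by an amount proportional to its length is an inner uniform curve.
-/

section Curves

variable {X Y : Type*} [PseudoEMetricSpace X] [PseudoEMetricSpace Y] {s : Set X} {γ : ℝ → X}

lemma edist_add_edist_le_curveLength (γ : ℝ → X) {t : ℝ} (ht : t ∈ Icc (0 : ℝ) 1) :
    edist (γ 0) (γ t) + edist (γ t) (γ 1) ≤ curveLength γ := by
  calc edist (γ 0) (γ t) + edist (γ t) (γ 1)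
      ≤ eVariationOn γ (Icc 0 t) + eVariationOn γ (Icc t 1) := by
        gcongr
        · exact eVariationOn.edist_le γ (left_mem_Icc.2 ht.1) (right_mem_Icc.2 ht.1)
        · exact eVariationOn.edist_le γ (left_mem_Icc.2 ht.2) (right_mem_Icc.2 ht.2)
    _ ≤ eVariationOn γ (Icc 0 t ∪ Icc t 1) :=
        eVariationOn.add_le_union γ fun _ ha _ hb => ha.2.trans hb.1
    _ = curveLength γ := by rw [Icc_union_Icc_eq_Icc ht.1 ht.2, curveLength]

lemma edist_le_innerDist (s : Set X) (x y : X) : edist x y ≤ innerDist s x y :=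
  le_iInf₂ fun γ ⟨_, _, h₀, h₁⟩ =>
    h₀ ▸ h₁ ▸ eVariationOn.edist_le γ (left_mem_Icc.2 zero_le_one) (right_mem_Icc.2 zero_le_one)

lemma innerDist_le_curveLength {x y : X} (h : IsCurveIn s x y γ) :
    innerDist s x y ≤ curveLength γ :=
  iInf₂_le γ h

lemma curveLength_comp_le {f : X → Y} {K : NNReal} (hf : LipschitzOnWith K f s)
    (hγ : MapsTo γ (Icc 0 1) s) : curveLength (f ∘ γ) ≤ K * curveLength γ :=
  hf.comp_eVariationOn_le hγ

lemma innerDist_image_le {f : X → Y} {K : NNReal} (hK : K ≠ 0) (hf : LipschitzOnWith K f s)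
    (x y : X) : innerDist (f '' s) (f x) (f y) ≤ K * innerDist s x y := by
  have hK₀ : (K : ℝ≥0∞) ≠ 0 := by exact_mod_cast hK
  simp only [innerDist, ENNReal.mul_iInf_of_ne hK₀ coe_ne_top]
  refine le_iInf₂ fun γ hγ => ?_
  obtain ⟨hcont, hmaps, h₀, h₁⟩ := hγ
  have hcurve : IsCurveIn (f '' s) (f x) (f y) (f ∘ γ) :=
    ⟨hf.continuousOn.comp hcont hmaps, (mapsTo_image f s).comp hmaps,
      congrArg f h₀, congrArg f h₁⟩
  exact (innerDist_le_curveLength hcurve).trans (curveLength_comp_le hf hmaps)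

lemma curveLength_le_of_lipschitzOnWith {K : NNReal} (hγ : LipschitzOnWith K γ (Icc 0 1)) :
    curveLength γ ≤ K := by
  have hid : curveLength (id : ℝ → ℝ) ≤ 1 := by
    simp [curveLength]
  calc curveLength γ ≤ K * curveLength (id : ℝ → ℝ) := curveLength_comp_le hγ (mapsTo_id _)
    _ ≤ K * 1 := by gcongr
    _ = K := mul_one _

lemma innerDist_le_of_lipschitzOnWith {K : NNReal} (hγ : LipschitzOnWith K γ (Icc 0 1))
    (hs : MapsTo γ (Icc 0 1) s) {a b : ℝ} (ha : a ∈ Icc (0 : ℝ) 1) (hb : b ∈ Icc (0 : ℝ) 1) :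
    innerDist s (γ a) (γ b) ≤ K * edist a b := by
  have hline : MapsTo (AffineMap.lineMap (k := ℝ) a b) (Icc 0 1) (Icc (0 : ℝ) 1) :=
    fun t ht => (convex_Icc 0 1).lineMap_mem ha hb ht
  have hlip : LipschitzOnWith (K * nndist a b) (γ ∘ AffineMap.lineMap (k := ℝ) a b) (Icc 0 1) :=
    hγ.comp (lipschitzWith_lineMap a b).lipschitzOnWith hline
  have hcurve : IsCurveIn s (γ a) (γ b) (γ ∘ AffineMap.lineMap (k := ℝ) a b) :=
    ⟨hlip.continuousOn, hs.comp hline, by simp, by simp⟩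
  calc innerDist s (γ a) (γ b) ≤ (K * nndist a b : NNReal) :=
        (innerDist_le_curveLength hcurve).trans (curveLength_le_of_lipschitzOnWith hlip)
    _ = K * edist a b := by rw [ENNReal.coe_mul, edist_nndist]

lemma isInnerUniformCurve_of_lipschitzOnWith {c C : ℝ} {K : NNReal}
    (hγ : LipschitzOnWith K γ (Icc 0 1)) (hs : MapsTo γ (Icc 0 1) s)
    (hK : K ≤ ENNReal.ofReal C * edist (γ 0) (γ 1))
    (hdepth : ∀ t ∈ Icc (0 : ℝ) 1,
      ENNReal.ofReal (c * (K * min t (1 - t))) ≤ infEDist (γ t) sᶜ) :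
    IsInnerUniformCurve c C s γ := by
  have h₀ : (0 : ℝ) ∈ Icc (0 : ℝ) 1 := left_mem_Icc.2 zero_le_one
  have h₁ : (1 : ℝ) ∈ Icc (0 : ℝ) 1 := right_mem_Icc.2 zero_le_one
  refine ⟨hγ.continuousOn, hs, ?_, fun t ht => le_trans ?_ (hdepth t ht)⟩
  · calc curveLength γ ≤ K := curveLength_le_of_lipschitzOnWith hγ
      _ ≤ ENNReal.ofReal C * edist (γ 0) (γ 1) := hK
      _ ≤ ENNReal.ofReal C * innerDist s (γ 0) (γ 1) := by gcongr; exact edist_le_innerDist ..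
  · have hleft : innerDist s (γ 0) (γ t) ≤ ENNReal.ofReal (K * t) := by
      simpa [edist_dist, Real.dist_eq, abs_of_nonneg ht.1, ENNReal.ofReal_mul] using
        innerDist_le_of_lipschitzOnWith hγ hs h₀ ht
    have hright : innerDist s (γ t) (γ 1) ≤ ENNReal.ofReal (K * (1 - t)) := by
      simpa [edist_dist, dist_comm t, Real.dist_eq, abs_of_nonneg (sub_nonneg.2 ht.2),
        ENNReal.ofReal_mul] using innerDist_le_of_lipschitzOnWith hγ hs ht h₁
    have hmin : 0 ≤ K * min t (1 - t) :=
      mul_nonneg K.coe_nonneg (le_min ht.1 (sub_nonneg.2 ht.2))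
    rw [ENNReal.ofReal_mul' hmin, mul_min_of_nonneg _ _ K.coe_nonneg, ENNReal.ofReal_min]
    gcongr

lemma IsInnerUniformCurve.comp {f : X → Y} {c C : ℝ} {K L M : NNReal}
    (hγ : IsInnerUniformCurve c C s γ) (hK : K ≠ 0) (hM : M ≠ 0) (hf : LipschitzOnWith K f s)
    (hinner : ∀ x ∈ s, ∀ y ∈ s, innerDist s x y ≤ L * innerDist (f '' s) (f x) (f y))
    (hdepth : ∀ x ∈ s, infEDist x sᶜ ≤ M * infEDist (f x) (f '' s)ᶜ) :
    IsInnerUniformCurve (c / (M * K)) (C * K * L) (f '' s) (f ∘ γ) := by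
  obtain ⟨hcont, hmaps, hlength, hγdepth⟩ := hγ
  have h₀ : γ 0 ∈ s := hmaps (left_mem_Icc.2 zero_le_one)
  have h₁ : γ 1 ∈ s := hmaps (right_mem_Icc.2 zero_le_one)
  refine ⟨hf.continuousOn.comp hcont hmaps, (mapsTo_image f s).comp hmaps, ?_, fun t ht => ?_⟩
  · calc curveLength (f ∘ γ) ≤ K * curveLength γ := curveLength_comp_le hf hmaps
      _ ≤ K * (ENNReal.ofReal C * (L * innerDist (f '' s) (f (γ 0)) (f (γ 1)))) := by
          gcongr; exact hlength.trans (by gcongr; exact hinner _ h₀ _ h₁)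
      _ = ENNReal.ofReal (C * K * L) * innerDist (f '' s) (f (γ 0)) (f (γ 1)) := by
          rw [ENNReal.ofReal_mul' L.coe_nonneg, ENNReal.ofReal_mul' K.coe_nonneg,
            ENNReal.ofReal_coe_nnreal, ENNReal.ofReal_coe_nnreal]
          ring
  · have hscale : M * ENNReal.ofReal (c / (M * K)) * K = ENNReal.ofReal c := by
      rw [mul_right_comm, ← ENNReal.ofReal_coe_nnreal, ← ENNReal.ofReal_coe_nnreal,
        ← ENNReal.ofReal_mul M.coe_nonneg, ← ENNReal.ofReal_mul (by positivity),
        mul_div_cancel₀ _ (by positivity)]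
    have hmin : min (innerDist (f '' s) (f (γ 0)) (f (γ t)))
        (innerDist (f '' s) (f (γ t)) (f (γ 1))) ≤
          K * min (innerDist s (γ 0) (γ t)) (innerDist s (γ t) (γ 1)) := by
      rw [mul_min]
      exact min_le_min (innerDist_image_le hK hf _ _) (innerDist_image_le hK hf _ _)
    have hM₀ : (M : ℝ≥0∞) ≠ 0 := by exact_mod_cast hM
    refine (ENNReal.mul_le_mul_iff_right hM₀ coe_ne_top).1 ?_
    calc M * (ENNReal.ofReal (c / (M * K)) * _)
        ≤ M * (ENNReal.ofReal (c / (M * K)) *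
            (K * min (innerDist s (γ 0) (γ t)) (innerDist s (γ t) (γ 1)))) := by gcongr; exact hmin
      _ = ENNReal.ofReal c * min (innerDist s (γ 0) (γ t)) (innerDist s (γ t) (γ 1)) := by
          rw [← hscale]; ring
      _ ≤ M * infEDist (f (γ t)) (f '' s)ᶜ := (hγdepth t ht).trans (hdepth _ (hmaps ht))

lemma isOpen_image_of_infEDist_compl_le {f : X → Y} {M : NNReal} (hs : IsOpen s)
    (hdepth : ∀ x ∈ s, infEDist x sᶜ ≤ M * infEDist (f x) (f '' s)ᶜ) : IsOpen (f '' s) := by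
  rw [← isClosed_compl_iff, ← closure_subset_iff_isClosed]
  rintro _ hclosure ⟨x, hx, rfl⟩
  have hzero : infEDist x sᶜ = 0 := by
    simpa [mem_closure_iff_infEDist_zero.1 hclosure] using hdepth x hx
  have hmem : x ∈ closure sᶜ := mem_closure_iff_infEDist_zero.2 hzero
  exact hs.isClosed_compl.closure_eq ▸ hmem <| hx

theorem IsInnerUniformDomain.image {f : X → Y} {c C : ℝ} {K L M : NNReal}
    (hs : IsInnerUniformDomain c C s) (hK : K ≠ 0) (hM : M ≠ 0) (hf : LipschitzOnWith K f s)
    (hinner : ∀ x ∈ s, ∀ y ∈ s, innerDist s x y ≤ L * innerDist (f '' s) (f x) (f y))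
    (hdepth : ∀ x ∈ s, infEDist x sᶜ ≤ M * infEDist (f x) (f '' s)ᶜ) :
    IsInnerUniformDomain (c / (M * K)) (C * K * L) (f '' s) := by
  obtain ⟨hopen, hconn, hcurve⟩ := hs
  refine ⟨isOpen_image_of_infEDist_compl_le hopen hdepth, hconn.image f hf.continuousOn, ?_⟩
  rintro _ ⟨x, hx, rfl⟩ _ ⟨y, hy, rfl⟩
  obtain ⟨γ, hγ, rfl, rfl⟩ := hcurve x hx y hy
  exact ⟨f ∘ γ, hγ.comp hK hM hf hinner hdepth, rfl, rfl⟩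

end Curves

section DistanceToComplement

open scoped InnerProductSpace

lemma le_infEDist_compl_of_ball_subset {X : Type*} [PseudoMetricSpace X] {s : Set X} {x : X}
    {ε : ℝ} (h : ball x ε ⊆ s) : ENNReal.ofReal ε ≤ infEDist x sᶜ := by
  refine le_infEDist.2 fun y hy => ?_
  rw [edist_comm, edist_dist]
  exact ENNReal.ofReal_le_ofReal (not_lt.1 fun hlt => hy (h hlt))

lemma infEDist_compl_ball_le {E : Type*} [SeminormedAddCommGroup E] [NormedSpace ℝ E]
    {x : E} {R : ℝ} (hx : ‖x‖ ≠ 0) (hxR : ‖x‖ ≤ R) :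
    infEDist x (ball 0 R)ᶜ ≤ ENNReal.ofReal (R - ‖x‖) := by
  have hmem : (R / ‖x‖) • x ∈ (ball 0 R)ᶜ := by
    simp [norm_smul, hx, le_abs_self]
  refine (infEDist_le_edist_of_mem hmem).trans_eq ?_
  have hsub : x - (R / ‖x‖) • x = -((R - ‖x‖) / ‖x‖) • x := by
    match_scalars
    field_simp
    ring
  rw [edist_dist, dist_eq_norm, hsub, norm_smul, norm_neg, norm_div, norm_norm,
    div_mul_cancel₀ _ hx, Real.norm_of_nonneg (sub_nonneg.2 hxR)]

lemma infEDist_compl_halfSpace_le {E : Type*} [SeminormedAddCommGroup E]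
    [InnerProductSpace ℝ E] {u x : E} (hu : ‖u‖ = 1) (hx : 0 ≤ ⟪u, x⟫_ℝ) :
    infEDist x {y | 0 < ⟪u, y⟫_ℝ}ᶜ ≤ ENNReal.ofReal ⟪u, x⟫_ℝ := by
  have hmem : x - ⟪u, x⟫_ℝ • u ∈ {y | 0 < ⟪u, y⟫_ℝ}ᶜ := by
    simp [inner_sub_right, inner_smul_right, hu]
  refine (infEDist_le_edist_of_mem hmem).trans_eq ?_
  rw [edist_dist, dist_eq_norm, sub_sub_self, norm_smul, hu, mul_one, Real.norm_of_nonneg hx]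

end DistanceToComplement

section Convex

variable {E : Type*} [SeminormedAddCommGroup E] [NormedSpace ℝ E] {s : Set E} {o p q : E}
  {r D : ℝ}

lemma innerDist_le_edist_of_convex (hs : Convex ℝ s) (hp : p ∈ s) (hq : q ∈ s) :
    innerDist s p q ≤ edist p q := by
  have hline : MapsTo (AffineMap.lineMap (k := ℝ) p q) (Icc 0 1) s :=
    fun t ht => hs.lineMap_mem hp hq ht
  simpa [← edist_nndist] using innerDist_le_of_lipschitzOnWith
    (lipschitzWith_lineMap (𝕜 := ℝ) p q).lipschitzOnWith hline
    (left_mem_Icc.2 zero_le_one) (right_mem_Icc.2 zero_le_one)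

lemma ball_lineMap_subset_of_convex (hs : Convex ℝ s) (hball : ball o r ⊆ s) (hp : p ∈ s)
    {μ : ℝ} (hμ : μ ∈ Icc (0 : ℝ) 1) : ball (AffineMap.lineMap p o μ) (μ * r) ⊆ s := by
  intro y hy
  rcases hμ.1.eq_or_lt with rfl | hμ₀
  · simp at hy
  have hz : o + μ⁻¹ • (y - AffineMap.lineMap p o μ) ∈ s := by
    apply hball
    rw [mem_ball_iff_norm, add_sub_cancel_left, norm_smul, norm_inv, Real.norm_of_nonneg hμ.1,
      inv_mul_lt_iff₀ hμ₀]
    exact mem_ball_iff_norm.1 hy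
  convert hs.lineMap_mem hp hz hμ using 1
  simp only [AffineMap.lineMap_apply_module, smul_add, smul_smul, mul_inv_cancel₀ hμ₀.ne']
  module

/-- The segment from `p` to `q` bent towards `o`: its midpoint is moved by an amount proportional
to `dist p q`. In a convex set of diameter at most `D` it stays away from the boundary in
proportion to the distance to its end points. -/
def bentSegment (o : E) (D : ℝ) (p q : E) (t : ℝ) : E :=
  AffineMap.lineMap (AffineMap.lineMap p q t : E) o (dist p q / D * (t * (1 - t)))

lemma bentSegment_zero (o : E) (D : ℝ) (p q : E) : bentSegment o D p q 0 = p := by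
  simp [bentSegment]

lemma bentSegment_one (o : E) (D : ℝ) (p q : E) : bentSegment o D p q 1 = q := by
  simp [bentSegment]

lemma bentSegment_sub_bentSegment (o : E) (D : ℝ) (p q : E) (a b : ℝ) :
    bentSegment o D p q a - bentSegment o D p q b =
      ((a - b) * (1 - dist p q / D * (a * (1 - a)))) • (q - p) +
        (dist p q / D * ((a - b) * (1 - a - b))) • (o - AffineMap.lineMap p q b) := by
  simp only [bentSegment, AffineMap.lineMap_apply_module]
  module

lemma div_mul_mul_one_sub_mem_Icc {d t : ℝ} (hd : 0 ≤ d) (hdD : d ≤ D) (ht : t ∈ Icc (0 : ℝ) 1) :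
    d / D * (t * (1 - t)) ∈ Icc (0 : ℝ) 1 :=
  unitInterval.mul_mem
    ⟨div_nonneg hd (hd.trans hdD), div_le_one_of_le₀ hdD (hd.trans hdD)⟩
    (unitInterval.mul_mem ht (Icc.one_sub_mem ht))

lemma lipschitzOnWith_bentSegment (hs : Convex ℝ s) (hD : ∀ x ∈ s, ∀ y ∈ s, dist x y ≤ D)
    (ho : o ∈ s) (hp : p ∈ s) (hq : q ∈ s) :
    LipschitzOnWith (2 * nndist p q) (bentSegment o D p q) (Icc 0 1) := by
  refine LipschitzOnWith.of_dist_le_mul fun a ha b hb => ?_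
  have hbend := div_mul_mul_one_sub_mem_Icc dist_nonneg (hD p hp q hq) ha
  have hchord : |1 - dist p q / D * (a * (1 - a))| ≤ 1 :=
    abs_le.2 ⟨by linarith [hbend.2], by linarith [hbend.1]⟩
  have hslope : |1 - a - b| ≤ 1 := abs_le.2 ⟨by linarith [ha.2, hb.2], by linarith [ha.1, hb.1]⟩
  have hD₀ : 0 ≤ D := dist_nonneg.trans (hD p hp q hq)
  have hcenter : ‖o - AffineMap.lineMap p q b‖ ≤ D :=
    dist_eq_norm o _ ▸ hD o ho _ (hs.lineMap_mem hp hq hb)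
  rw [dist_eq_norm, bentSegment_sub_bentSegment]
  calc _ ≤ |a - b| * |1 - dist p q / D * (a * (1 - a))| * dist p q +
        dist p q / D * (|a - b| * |1 - a - b|) * ‖o - AffineMap.lineMap p q b‖ := by
        refine (norm_add_le _ _).trans_eq ?_
        rw [norm_smul, norm_smul, ← dist_eq_norm q p, dist_comm q p]
        simp only [Real.norm_eq_abs, abs_mul, abs_of_nonneg (div_nonneg dist_nonneg hD₀)]
    _ ≤ |a - b| * 1 * dist p q + dist p q / D * (|a - b| * 1) * D := by gcongr
    _ = |a - b| * dist p q * (1 + D / D) := by ring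
    _ ≤ |a - b| * dist p q * 2 := by gcongr; linarith [div_self_le_one D]
    _ = _ := by
        rw [Real.dist_eq]
        push_cast
        ring

theorem isInnerUniformDomain_of_convex (hs : Convex ℝ s) (hopen : IsOpen s)
    (hD : ∀ x ∈ s, ∀ y ∈ s, dist x y ≤ D) (hr : 0 < r) (hball : ball o r ⊆ s) :
    IsInnerUniformDomain (r / (4 * D)) 2 s := by
  have ho : o ∈ s := hball (mem_ball_self hr)
  refine ⟨hopen, hs.isConnected ⟨o, ho⟩, fun p hp q hq => ⟨bentSegment o D p q,
    isInnerUniformCurve_of_lipschitzOnWith (lipschitzOnWith_bentSegment hs hD ho hp hq) ?_ ?_ ?_,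
    bentSegment_zero .., bentSegment_one ..⟩⟩
  · exact fun t ht => hs.lineMap_mem (hs.lineMap_mem hp hq ht) ho
      (div_mul_mul_one_sub_mem_Icc dist_nonneg (hD p hp q hq) ht)
  · simp [bentSegment_zero, bentSegment_one]
  · intro t ht
    have hmin : min t (1 - t) ≤ 2 * (t * (1 - t)) := by
      rcases le_total t (1 - t) with h | h
      · rw [min_eq_left h]; nlinarith [ht.1]
      · rw [min_eq_right h]; nlinarith [ht.2]
    refine le_trans (ENNReal.ofReal_le_ofReal ?_) (le_infEDist_compl_of_ball_subset
      (ball_lineMap_subset_of_convex hs hball (hs.lineMap_mem hp hq ht)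
        (div_mul_mul_one_sub_mem_Icc dist_nonneg (hD p hp q hq) ht)))
    have hD₀ : 0 ≤ D := dist_nonneg.trans (hD p hp q hq)
    calc r / (4 * D) * ((2 * nndist p q : NNReal) * min t (1 - t))
        ≤ r / (4 * D) * ((2 * nndist p q : NNReal) * (2 * (t * (1 - t)))) := by gcongr
      _ = dist p q / D * (t * (1 - t)) * r := by
        push_cast
        ring

end Convex

section AngleDoubling

open InnerProductGeometry
open scoped ComplexConjugate InnerProductSpace

/-- The map `r e^{iθ} ↦ r e^{2iθ}` of the plane, which doubles angles and preserves moduli.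
It sends `0` to `0`, by division by zero. -/
def angleDouble (w : ℂ) : ℂ := w ^ 2 / ‖w‖

lemma norm_angleDouble (w : ℂ) : ‖angleDouble w‖ = ‖w‖ := by
  simp [angleDouble, sq]

lemma angleDouble_re (w : ℂ) : (angleDouble w).re = (w.re ^ 2 - w.im ^ 2) / ‖w‖ := by
  rw [angleDouble, Complex.div_ofReal_re, sq, Complex.mul_re, sq, sq]

lemma angleDouble_im (w : ℂ) : (angleDouble w).im = 2 * w.re / ‖w‖ * w.im := by
  rw [angleDouble, Complex.div_ofReal_im, sq, Complex.mul_im]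
  ring

lemma angleDouble_mul_conj (w : ℂ) : angleDouble w * conj w = ‖w‖ * w := by
  rcases eq_or_ne w 0 with rfl | hw
  · simp
  have hnorm : (‖w‖ : ℂ) ≠ 0 := by simpa using hw
  rw [angleDouble, div_mul_eq_mul_div, div_eq_iff hnorm]
  linear_combination w * Complex.mul_conj' w

lemma angleDouble_norm_mul_exp {r : ℝ} (hr : 0 ≤ r) (θ : ℝ) :
    angleDouble (r * Complex.exp (θ * Complex.I)) = r * Complex.exp (2 * θ * Complex.I) := by
  rcases hr.eq_or_lt with rfl | hr
  · simp [angleDouble]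
  have hr₀ : (r : ℂ) ≠ 0 := by exact_mod_cast hr.ne'
  rw [angleDouble, norm_mul, Complex.norm_exp_ofReal_mul_I, mul_one, Complex.norm_of_nonneg hr.le,
    div_eq_iff hr₀, mul_pow, ← Complex.exp_nat_mul, Nat.cast_ofNat, mul_assoc 2]
  ring

lemma inner_angleDouble (w z : ℂ) :
    ⟪angleDouble w, angleDouble z⟫_ℝ = ‖w‖ * ‖z‖ * (2 * Real.cos (angle w z) ^ 2 - 1) := by
  rcases eq_or_ne w 0 with rfl | hw
  · simp [angleDouble]
  rcases eq_or_ne z 0 with rfl | hz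
  · simp [angleDouble]
  have hnormw := norm_ne_zero_iff.2 hw
  have hnormz := norm_ne_zero_iff.2 hz
  have hsqw : ‖w‖ ^ 2 = w.re ^ 2 + w.im ^ 2 := by rw [Complex.sq_norm, Complex.normSq_apply]; ring
  have hsqz : ‖z‖ ^ 2 = z.re ^ 2 + z.im ^ 2 := by rw [Complex.sq_norm, Complex.normSq_apply]; ring
  rw [cos_angle, Complex.inner, Complex.inner]
  simp only [Complex.mul_re, Complex.conj_re, Complex.conj_im, angleDouble_re, angleDouble_im]
  field_simp
  rw [hsqw, hsqz]
  ring

lemma norm_angleDouble_sub_sq (w z : ℂ) :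
    ‖angleDouble w - angleDouble z‖ ^ 2 =
      (‖w‖ + ‖z‖) ^ 2 - 4 * (‖w‖ * ‖z‖) * Real.cos (angle w z) ^ 2 := by
  rw [norm_sub_sq_real, inner_angleDouble, norm_angleDouble, norm_angleDouble]
  ring

lemma norm_angleDouble_sub_le (w z : ℂ) : ‖angleDouble w - angleDouble z‖ ≤ 2 * ‖w - z‖ := by
  refine (sq_le_sq₀ (norm_nonneg _) (by positivity)).1 ?_
  rw [mul_pow, norm_angleDouble_sub_sq, norm_sub_sq_real, ← cos_angle_mul_norm_mul_norm]
  nlinarith [sq_nonneg (‖w‖ - ‖z‖),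
    mul_nonneg (mul_nonneg (norm_nonneg w) (norm_nonneg z)) (sq_nonneg (1 - Real.cos (angle w z)))]

lemma norm_sub_le_norm_angleDouble_sub {w z : ℂ} (h : 0 ≤ ⟪w, z⟫_ℝ) :
    ‖w - z‖ ≤ ‖angleDouble w - angleDouble z‖ := by
  have hcos : 0 ≤ Real.cos (angle w z) := by rw [cos_angle]; positivity
  refine (sq_le_sq₀ (norm_nonneg _) (norm_nonneg _)).1 ?_
  rw [norm_angleDouble_sub_sq, norm_sub_sq_real, ← cos_angle_mul_norm_mul_norm]
  have hfactor : 0 ≤ ‖w‖ * ‖z‖ *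
      ((1 - Real.cos (angle w z)) * (1 + 2 * Real.cos (angle w z))) :=
    mul_nonneg (by positivity) (mul_nonneg (sub_nonneg.2 (Real.cos_le_one _)) (by linarith))
  linarith

lemma inner_nonneg_of_angleDouble_im_mul_nonneg {w z : ℂ} (hw : 0 < w.re) (hz : 0 < z.re)
    (h : 0 ≤ (angleDouble w).im * (angleDouble z).im) : 0 ≤ ⟪w, z⟫_ℝ := by
  have hnormw : 0 < ‖w‖ := hw.trans_le (Complex.re_le_norm w)
  have hnormz : 0 < ‖z‖ := hz.trans_le (Complex.re_le_norm z)
  rw [angleDouble_im, angleDouble_im, mul_mul_mul_comm] at h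
  have him : 0 ≤ w.im * z.im := nonneg_of_mul_nonneg_right h (by positivity)
  rw [Complex.inner]
  simp only [Complex.mul_re, Complex.conj_re, Complex.conj_im]
  nlinarith [mul_pos hw hz]

lemma re_le_norm_angleDouble_sub {w : ℂ} (hw : 0 ≤ w.re) {r : ℝ} (hr : r ≤ 0) :
    w.re ≤ ‖angleDouble w - r‖ := by
  rcases hw.eq_or_lt with hw | hw
  · simp [← hw]
  have hnorm : 0 < ‖w‖ := hw.trans_le (Complex.re_le_norm w)
  have hre : ((angleDouble w - r) * conj w).re = (‖w‖ - r) * w.re := by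
    rw [sub_mul, angleDouble_mul_conj]
    simp
    ring
  refine le_of_mul_le_mul_right ?_ hnorm
  calc w.re * ‖w‖ ≤ (‖w‖ - r) * w.re := by nlinarith
    _ ≤ ‖(angleDouble w - r) * conj w‖ := hre ▸ Complex.re_le_norm _
    _ = ‖angleDouble w - r‖ * ‖w‖ := by rw [norm_mul, RCLike.norm_conj]

lemma angleDouble_mem_slitPlane {w : ℂ} (hw : 0 < w.re) : angleDouble w ∈ Complex.slitPlane := by
  by_contra hmem
  obtain ⟨hre, him⟩ := not_or.1 hmem
  have heq : angleDouble w = (angleDouble w).re := Complex.ext rfl (by simpa using him)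
  have hle := re_le_norm_angleDouble_sub hw.le (not_lt.1 hre)
  rw [← heq, sub_self, norm_zero] at hle
  exact hle.not_gt hw

lemma exists_angleDouble_eq {z : ℂ} (hz : z ∈ Complex.slitPlane) :
    ∃ w : ℂ, 0 < w.re ∧ angleDouble w = z := by
  obtain ⟨harg, hz₀⟩ := Complex.mem_slitPlane_iff_arg.1 hz
  refine ⟨‖z‖ * Complex.exp ((z.arg / 2 : ℝ) * Complex.I), ?_, ?_⟩
  · rw [Complex.re_ofReal_mul, Complex.exp_ofReal_mul_I_re]
    have hlt := (Complex.arg_le_pi z).lt_of_ne harg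
    have hgt := Complex.neg_pi_lt_arg z
    exact mul_pos (norm_pos_iff.2 hz₀) (Real.cos_pos_of_mem_Ioo ⟨by linarith, by linarith⟩)
  · rw [angleDouble_norm_mul_exp (norm_nonneg z)]
    convert Complex.norm_mul_exp_arg_mul_I z using 4
    push_cast
    ring

end AngleDoubling

section PlaneCoordinates

open scoped InnerProductSpace

variable {E : Type*} [NormedAddCommGroup E] [InnerProductSpace ℝ E] {e : Fin 2 → E}

/-- The coordinates of the orthogonal projection of `x` to the plane with orthonormal basis
`e 0, e 1`, as a complex number. -/
def planeCoord (e : Fin 2 → E) (x : E) : ℂ := ⟨⟪e 0, x⟫_ℝ, ⟪e 1, x⟫_ℝ⟩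

/-- The point with plane coordinates `w` and the same component as `x` orthogonal to the plane
with orthonormal basis `e 0, e 1`. -/
def setPlaneCoord (e : Fin 2 → E) (x : E) (w : ℂ) : E :=
  x + ((w.re - ⟪e 0, x⟫_ℝ) • e 0 + (w.im - ⟪e 1, x⟫_ℝ) • e 1)

lemma planeCoord_sub (e : Fin 2 → E) (x y : E) :
    planeCoord e (x - y) = planeCoord e x - planeCoord e y := by
  apply Complex.ext <;> simp [planeCoord, inner_sub_right]

lemma setPlaneCoord_sub (e : Fin 2 → E) (x y : E) (w z : ℂ) :
    setPlaneCoord e (x - y) (w - z) = setPlaneCoord e x w - setPlaneCoord e y z := by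
  simp only [setPlaneCoord, inner_sub_right, Complex.sub_re, Complex.sub_im]
  module

lemma setPlaneCoord_planeCoord (e : Fin 2 → E) (x : E) :
    setPlaneCoord e x (planeCoord e x) = x := by
  simp [setPlaneCoord, planeCoord]

lemma planeCoord_setPlaneCoord (he : Orthonormal ℝ e) (x : E) (w : ℂ) :
    planeCoord e (setPlaneCoord e x w) = w := by
  apply Complex.ext <;>
    simp [planeCoord, setPlaneCoord, inner_add_right, inner_smul_right, he.inner_eq_zero, he.1]

lemma setPlaneCoord_setPlaneCoord (he : Orthonormal ℝ e) (x : E) (w z : ℂ) :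
    setPlaneCoord e (setPlaneCoord e x w) z = setPlaneCoord e x z := by
  have hre := congrArg Complex.re (planeCoord_setPlaneCoord he x w)
  have him := congrArg Complex.im (planeCoord_setPlaneCoord he x w)
  simp only [planeCoord] at hre him
  rw [setPlaneCoord, hre, him]
  simp only [setPlaneCoord]
  module

lemma norm_setPlaneCoord_sq (he : Orthonormal ℝ e) (x : E) (w : ℂ) :
    ‖setPlaneCoord e x w‖ ^ 2 = ‖x‖ ^ 2 - ‖planeCoord e x‖ ^ 2 + ‖w‖ ^ 2 := by
  have h₀ : ‖e 0‖ = 1 := he.1 0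
  have h₁ : ‖e 1‖ = 1 := he.1 1
  have h₀₁ : ⟪e 0, e 1⟫_ℝ = 0 := he.2 zero_ne_one
  simp only [setPlaneCoord, planeCoord, Complex.sq_norm, Complex.normSq_apply, norm_add_sq_real,
    inner_add_right, real_inner_smul_left, real_inner_smul_right, norm_smul, mul_pow, h₀, h₁, h₀₁,
    real_inner_comm (e 0) x, real_inner_comm (e 1) x, Real.norm_eq_abs, sq_abs]
  ring

lemma norm_planeCoord_le (he : Orthonormal ℝ e) (x : E) : ‖planeCoord e x‖ ≤ ‖x‖ := by
  refine (sq_le_sq₀ (norm_nonneg _) (norm_nonneg _)).1 ?_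
  have := norm_setPlaneCoord_sq he x 0
  rw [norm_zero] at this
  nlinarith [sq_nonneg ‖setPlaneCoord e x 0‖]

/-- Angle doubling in the plane with orthonormal basis `e 0, e 1`, leaving the orthogonal
component fixed. It opens the half ball onto the slit ball. -/
def planeAngleDouble (e : Fin 2 → E) (x : E) : E :=
  setPlaneCoord e x (angleDouble (planeCoord e x))

lemma planeCoord_planeAngleDouble (he : Orthonormal ℝ e) (x : E) :
    planeCoord e (planeAngleDouble e x) = angleDouble (planeCoord e x) :=
  planeCoord_setPlaneCoord he _ _

lemma norm_planeAngleDouble (he : Orthonormal ℝ e) (x : E) : ‖planeAngleDouble e x‖ = ‖x‖ := by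
  refine (sq_eq_sq₀ (norm_nonneg _) (norm_nonneg _)).1 ?_
  rw [planeAngleDouble, norm_setPlaneCoord_sq he, norm_angleDouble, sub_add_cancel]

lemma dist_planeAngleDouble_sq (he : Orthonormal ℝ e) (x y : E) :
    dist (planeAngleDouble e x) (planeAngleDouble e y) ^ 2 =
      dist x y ^ 2 - ‖planeCoord e x - planeCoord e y‖ ^ 2 +
        ‖angleDouble (planeCoord e x) - angleDouble (planeCoord e y)‖ ^ 2 := by
  rw [dist_eq_norm, dist_eq_norm, planeAngleDouble, planeAngleDouble, ← setPlaneCoord_sub,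
    norm_setPlaneCoord_sq he, planeCoord_sub]

lemma lipschitzWith_planeAngleDouble (he : Orthonormal ℝ e) :
    LipschitzWith 2 (planeAngleDouble e) := by
  refine LipschitzWith.of_dist_le_mul fun x y => ?_
  refine (sq_le_sq₀ dist_nonneg (by positivity)).1 ?_
  have hplane : ‖planeCoord e x - planeCoord e y‖ ^ 2 ≤ dist x y ^ 2 := by
    rw [← planeCoord_sub, dist_eq_norm]
    gcongr
    exact norm_planeCoord_le he _
  have hdouble := pow_le_pow_left₀ (norm_nonneg _)
    (norm_angleDouble_sub_le (planeCoord e x) (planeCoord e y)) 2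
  rw [dist_planeAngleDouble_sq he, NNReal.coe_ofNat]
  linarith

lemma dist_le_dist_planeAngleDouble (he : Orthonormal ℝ e) {x y : E} (hx : 0 < ⟪e 0, x⟫_ℝ)
    (hy : 0 < ⟪e 0, y⟫_ℝ)
    (hside : 0 ≤ ⟪e 1, planeAngleDouble e x⟫_ℝ * ⟪e 1, planeAngleDouble e y⟫_ℝ) :
    dist x y ≤ dist (planeAngleDouble e x) (planeAngleDouble e y) := by
  refine (sq_le_sq₀ dist_nonneg dist_nonneg).1 ?_
  have him (z : E) : ⟪e 1, planeAngleDouble e z⟫_ℝ = (angleDouble (planeCoord e z)).im :=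
    congrArg Complex.im (planeCoord_planeAngleDouble he z)
  rw [him, him] at hside
  have hinner : 0 ≤ ⟪planeCoord e x, planeCoord e y⟫_ℝ :=
    inner_nonneg_of_angleDouble_im_mul_nonneg hx hy hside
  have hdouble := pow_le_pow_left₀ (norm_nonneg _) (norm_sub_le_norm_angleDouble_sub hinner) 2
  rw [dist_planeAngleDouble_sq he]
  linarith

end PlaneCoordinates

lemma exists_mem_Icc_mul_nonneg {f : ℝ → ℝ} {a b : ℝ} (hab : a ≤ b)
    (hf : ContinuousOn f (Icc a b)) : ∃ t ∈ Icc a b, 0 ≤ f a * f t ∧ 0 ≤ f t * f b := by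
  by_cases hside : 0 ≤ f a * f b
  · exact ⟨a, left_mem_Icc.2 hab, mul_self_nonneg _, hside⟩
  have hzero : (0 : ℝ) ∈ uIcc (f a) (f b) := by
    rcases mul_neg_iff.1 (not_le.1 hside) with ⟨ha, hb⟩ | ⟨ha, hb⟩
    · exact mem_uIcc_of_ge hb.le ha.le
    · exact mem_uIcc_of_le ha.le hb.le
  rw [← uIcc_of_le hab] at hf ⊢
  obtain ⟨t, ht, hft⟩ := intermediate_value_uIcc hf hzero
  exact ⟨t, ht, by simp [hft], by simp [hft]⟩

section SlitBall

open scoped InnerProductSpace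

variable {E : Type*} [NormedAddCommGroup E] [InnerProductSpace ℝ E] {e : Fin 2 → E} {R : ℝ}

/-- The half of the open ball of radius `R` about the origin in which the coordinate along `e 0`
is positive. -/
def halfBall (e : Fin 2 → E) (R : ℝ) : Set E := ball 0 R ∩ {x | 0 < ⟪e 0, x⟫_ℝ}

/-- The open ball of radius `R` about the origin without the closed half-hyperplane on which the
coordinate along `e 1` vanishes and that along `e 0` is not positive. -/
def slitBall (e : Fin 2 → E) (R : ℝ) : Set E :=
  ball 0 R \ {x | ⟪e 1, x⟫_ℝ = 0 ∧ ⟪e 0, x⟫_ℝ ≤ 0}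

lemma mem_slitBall_iff {x : E} :
    x ∈ slitBall e R ↔ x ∈ ball 0 R ∧ planeCoord e x ∈ Complex.slitPlane := by
  rw [slitBall, mem_sdiff, mem_ofPred_eq, Complex.mem_slitPlane_iff, not_and_or, not_le, or_comm]
  rfl

lemma planeAngleDouble_image_halfBall (he : Orthonormal ℝ e) (R : ℝ) :
    planeAngleDouble e '' halfBall e R = slitBall e R := by
  refine Subset.antisymm ?_ fun y hy => ?_
  · rintro _ ⟨x, ⟨hxR, hx⟩, rfl⟩
    refine mem_slitBall_iff.2 ⟨?_, ?_⟩
    · rwa [mem_ball_zero_iff, norm_planeAngleDouble he, ← mem_ball_zero_iff]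
    · rw [planeCoord_planeAngleDouble he]
      exact angleDouble_mem_slitPlane hx
  · obtain ⟨hyR, hslit⟩ := mem_slitBall_iff.1 hy
    obtain ⟨w, hw, hwy⟩ := exists_angleDouble_eq hslit
    have hcoord : planeCoord e (setPlaneCoord e y w) = w := planeCoord_setPlaneCoord he y w
    have hdouble : planeAngleDouble e (setPlaneCoord e y w) = y := by
      rw [planeAngleDouble, hcoord, hwy, setPlaneCoord_setPlaneCoord he, setPlaneCoord_planeCoord]
    refine ⟨setPlaneCoord e y w, ⟨?_, ?_⟩, hdouble⟩
    · rwa [mem_ball_zero_iff, ← norm_planeAngleDouble he, hdouble, ← mem_ball_zero_iff]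
    · exact hw.trans_eq (congrArg Complex.re hcoord).symm

lemma infEDist_compl_halfBall_le (he : Orthonormal ℝ e) {x : E} (hx : x ∈ halfBall e R) :
    infEDist x (halfBall e R)ᶜ ≤ infEDist (planeAngleDouble e x) (slitBall e R)ᶜ := by
  obtain ⟨hxR, hx₀⟩ := hx
  refine le_infEDist.2 fun y hy => ?_
  rw [edist_dist, dist_eq_norm]
  by_cases hyR : y ∈ ball 0 R
  · obtain ⟨hy₁, hy₀⟩ : ⟪e 1, y⟫_ℝ = 0 ∧ ⟪e 0, y⟫_ℝ ≤ 0 := by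
      simpa [slitBall, hyR] using hy
    have hcoord : planeCoord e y = (⟪e 0, y⟫_ℝ : ℂ) := Complex.ext rfl hy₁
    calc infEDist x (halfBall e R)ᶜ ≤ infEDist x {z | 0 < ⟪e 0, z⟫_ℝ}ᶜ :=
          infEDist_anti (compl_subset_compl.2 inter_subset_right)
      _ ≤ ENNReal.ofReal ⟪e 0, x⟫_ℝ := infEDist_compl_halfSpace_le (he.1 0) hx₀.le
      _ ≤ ENNReal.ofReal ‖planeCoord e (planeAngleDouble e x - y)‖ := by
          rw [planeCoord_sub, planeCoord_planeAngleDouble he, hcoord]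
          exact ENNReal.ofReal_le_ofReal
            (re_le_norm_angleDouble_sub (w := planeCoord e x) hx₀.le hy₀)
      _ ≤ ENNReal.ofReal ‖planeAngleDouble e x - y‖ :=
          ENNReal.ofReal_le_ofReal (norm_planeCoord_le he _)
  · have hxR' : ‖x‖ < R := mem_ball_zero_iff.1 hxR
    have hyR' : R ≤ ‖y‖ := not_lt.1 fun h => hyR (mem_ball_zero_iff.2 h)
    have hx_ne : ‖x‖ ≠ 0 := norm_ne_zero_iff.2 <| by rintro rfl; simp at hx₀
    calc infEDist x (halfBall e R)ᶜ ≤ infEDist x (ball 0 R)ᶜ :=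
          infEDist_anti (compl_subset_compl.2 inter_subset_left)
      _ ≤ ENNReal.ofReal (R - ‖x‖) := infEDist_compl_ball_le hx_ne hxR'.le
      _ ≤ ENNReal.ofReal ‖planeAngleDouble e x - y‖ := by
          refine ENNReal.ofReal_le_ofReal ?_
          have := norm_sub_norm_le y (planeAngleDouble e x)
          rw [norm_planeAngleDouble he, norm_sub_rev] at this
          linarith

lemma edist_le_innerDist_slitBall (he : Orthonormal ℝ e) {x y : E} (hx : x ∈ halfBall e R)
    (hy : y ∈ halfBall e R) :
    edist x y ≤ innerDist (slitBall e R) (planeAngleDouble e x) (planeAngleDouble e y) := by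
  have hedist {p q : E} (hp : p ∈ halfBall e R) (hq : q ∈ halfBall e R)
      (hside : 0 ≤ ⟪e 1, planeAngleDouble e p⟫_ℝ * ⟪e 1, planeAngleDouble e q⟫_ℝ) :
      edist p q ≤ edist (planeAngleDouble e p) (planeAngleDouble e q) := by
    rw [edist_dist, edist_dist]
    exact ENNReal.ofReal_le_ofReal (dist_le_dist_planeAngleDouble he hp.2 hq.2 hside)
  refine le_iInf₂ fun γ ⟨hcont, hmaps, h₀, h₁⟩ => ?_
  have hheight : ContinuousOn (fun t => ⟪e 1, γ t⟫_ℝ) (Icc 0 1) := by fun_prop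
  obtain ⟨t, ht, hside₀, hside₁⟩ := exists_mem_Icc_mul_nonneg zero_le_one hheight
  obtain ⟨z, hz, hzt⟩ := (planeAngleDouble_image_halfBall he R).ge (hmaps ht)
  simp only [h₀, h₁, ← hzt] at hside₀ hside₁
  calc edist x y ≤ edist x z + edist z y := edist_triangle x z y
    _ ≤ edist (γ 0) (γ t) + edist (γ t) (γ 1) := by
        rw [h₀, h₁, ← hzt]
        exact add_le_add (hedist hx hz hside₀) (hedist hz hy hside₁)
    _ ≤ curveLength γ := edist_add_edist_le_curveLength γ ht

lemma convex_halfBall (e : Fin 2 → E) (R : ℝ) : Convex ℝ (halfBall e R) :=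
  (convex_ball 0 R).inter (convex_halfSpace_gt (innerSL ℝ (e 0)).isLinear 0)

lemma isOpen_halfBall (e : Fin 2 → E) (R : ℝ) : IsOpen (halfBall e R) :=
  isOpen_ball.inter (isOpen_lt continuous_const (by fun_prop))

lemma ball_subset_halfBall (he : Orthonormal ℝ e) (R : ℝ) :
    ball ((R / 2) • e 0) (R / 2) ⊆ halfBall e R := by
  intro x hx
  have hdist : ‖x - (R / 2) • e 0‖ < R / 2 := mem_ball_iff_norm.1 hx
  have hR : 0 ≤ R / 2 := (norm_nonneg _).trans hdist.le
  have he₀ : ‖e 0‖ = 1 := he.1 0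
  refine ⟨mem_ball_zero_iff.2 ?_, ?_⟩
  · calc ‖x‖ ≤ ‖x - (R / 2) • e 0‖ + ‖(R / 2) • e 0‖ := norm_le_norm_sub_add _ _
      _ < R / 2 + R / 2 := by
          rw [norm_smul, he₀, Real.norm_of_nonneg hR, mul_one]
          gcongr
      _ = R := add_halves R
  · have hinner : |⟪e 0, x - (R / 2) • e 0⟫_ℝ| ≤ ‖x - (R / 2) • e 0‖ := by
      simpa [he₀] using abs_real_inner_le_norm (e 0) (x - (R / 2) • e 0)
    rw [inner_sub_right, inner_smul_right, real_inner_self_eq_norm_sq, he₀] at hinner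
    have := (abs_le.1 hinner).1
    rw [mem_ofPred_eq]
    linarith

lemma isInnerUniformDomain_halfBall (he : Orthonormal ℝ e) (hR : 0 < R) :
    IsInnerUniformDomain (1 / 16) 2 (halfBall e R) := by
  have hdiam : ∀ x ∈ halfBall e R, ∀ y ∈ halfBall e R, dist x y ≤ 2 * R := fun x hx y hy => by
    linarith [dist_triangle_right x y 0, mem_ball.1 hx.1, mem_ball.1 hy.1]
  have hratio : R / 2 / (4 * (2 * R)) = 1 / 16 := by
    field_simp
    norm_num
  exact hratio ▸ isInnerUniformDomain_of_convex (convex_halfBall e R) (isOpen_halfBall e R) hdiam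
    (half_pos hR) (ball_subset_halfBall he R)

theorem statement12_general (he : Orthonormal ℝ e) (hR : 0 < R) :
    IsInnerUniformDomain (1 / 32) 4 (slitBall e R) := by
  have himage := planeAngleDouble_image_halfBall he R
  have huniform := (isInnerUniformDomain_halfBall he hR).image (K := 2) (L := 1) (M := 1)
    two_ne_zero one_ne_zero (lipschitzWith_planeAngleDouble he).lipschitzOnWith
    (fun x hx y hy => by
      rw [himage, ENNReal.coe_one, one_mul]
      exact (innerDist_le_edist_of_convex (convex_halfBall e R) hx hy).trans
        (edist_le_innerDist_slitBall he hx hy))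
    (fun x hx => by
      rw [himage, ENNReal.coe_one, one_mul]
      exact infEDist_compl_halfBall_le he hx)
  rw [himage] at huniform
  convert huniform using 1 <;> norm_num

end SlitBall

/-- The open unit ball in `ℝⁿ`, `n ≥ 2`, with the trace of the closed half-hyperplane
`{x_n = 0, x_{n−1} ≤ 0}` removed, is an inner uniform domain. -/
theorem statement12 (n : ℕ) (hn : 2 ≤ n) :
    ∃ c ∈ Set.Ioo (0:ℝ) 1, ∃ C : ℝ, 1 < C ∧
      IsInnerUniformDomain c C
        (Metric.ball (0 : En n) 1 \
          {x : En n | x ⟨n - 1, by omega⟩ = 0 ∧ x ⟨n - 2, by omega⟩ ≤ 0}) := by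
  have hinj : Function.Injective ![(⟨n - 2, by omega⟩ : Fin n), ⟨n - 1, by omega⟩] := by
    intro a b
    fin_cases a <;> fin_cases b <;> simp <;> omega
  have he := (EuclideanSpace.orthonormal_single (𝕜 := ℝ)).comp _ hinj
  exact ⟨1 / 32, by norm_num, 4, by norm_num, by
    simpa [slitBall, EuclideanSpace.inner_single_left] using statement12_general he one_pos⟩
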